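/- arXiv:1610.05944 — 2 statements merged into one kernel-verified Lean document; each statement's English description precedes it below -/
import Mathlib

section
/- Let G be a finitely presented group. Then there exists a constant C depending only on G such that for every finite index subgroup H of G, the torsion subgroup of the abelianization H^{ab} has order at most C^{[G:H]}. -/
/-- A group is finitely presented if it is isomorphic to a presented group on finitely
many generators with finitely many relations. -/
def IsFinitelyPresented (G : Type*) [Group G] : Prop :=
  ∃ (n : ℕ) (rels : Set (FreeGroup (Fin n))),
    rels.Finite ∧ Nonempty (G ≃* PresentedGroup rels)

theorem det_bound {I : Type*} [Fintype I] [DecidableEq I] (A : Matrix I I ℤ) (L : ℕ)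
    (h : ∀ i, ∑ j, (A i j).natAbs ≤ L) : A.det.natAbs ≤ L ^ Fintype.card I := by
  rw [← Matrix.det_transpose, Matrix.det_apply]
  calc _ ≤ ∑ σ : Equiv.Perm I, ∏ i, (A i (σ i)).natAbs := by
        refine (Int.natAbs_sum_le _ _).trans (Finset.sum_le_sum fun σ _ => ?_)
        rcases Int.units_eq_one_or (Equiv.Perm.sign σ) with h | h <;>
        simp only [h, one_smul, Units.neg_smul, Int.natAbs_neg, Matrix.transpose_apply] <;>
        exact (map_prod Int.natAbsHom (fun i => A i (σ i)) Finset.univ).le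
    _ ≤ ∑ f : I → I, ∏ i, (A i (f i)).natAbs := by
        let e : Equiv.Perm I ↪ (I → I) := ⟨fun σ => σ, DFunLike.coe_injective⟩
        have := Finset.sum_map Finset.univ e (fun f : I → I => ∏ i, (A i (f i)).natAbs)
        rw [show (∑ σ : Equiv.Perm I, ∏ i, (A i (σ i)).natAbs) = _ from this.symm]
        exact Finset.sum_le_sum_of_subset (Finset.subset_univ _)
    _ = ∏ i, ∑ j, (A i j).natAbs := by
        rw [Finset.prod_univ_sum]; simp
    _ ≤ ∏ i : I, L := Finset.prod_le_prod' fun i _ => h i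
    _ = _ := by simp

/-- rational version of an integer vector -/
def castQ (I : Type*) : (I → ℤ) →ₗ[ℤ] (I → ℚ) where
  toFun v i := v i
  map_add' _ _ := by ext; simp
  map_smul' _ _ := by ext; simp

theorem lattice_bound {I : Type*} [Fintype I] [DecidableEq I] (S : Set (I → ℤ)) (L : ℕ) (hL : 1 ≤ L)
    (hS : ∀ v ∈ S, ∑ j, (v j).natAbs ≤ L) :
    ∃ (N : Submodule ℤ (I → ℤ)), Finite ((I → ℤ) ⧸ N) ∧
      Nat.card ((I → ℤ) ⧸ N) ≤ L ^ Fintype.card I ∧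
      ∀ x (k : ℤ), k ≠ 0 → k • x ∈ Submodule.span ℤ S → x ∈ N → x ∈ Submodule.span ℤ S := by
  obtain ⟨B, hBS, -, hSB, hB⟩ := exists_linearIndepOn_extension (K := ℚ) (v := castQ I)
    (s := ∅) (linearIndepOn_empty _ _) (Set.empty_subset S)
  obtain ⟨b, hbt, hBb, htb, hb⟩ := exists_linearIndepOn_extension (K := ℚ) (v := castQ I)
    hB (t := B ∪ Set.range (fun i => Pi.single i 1)) Set.subset_union_left
  have hspan : ⊤ ≤ Submodule.span ℚ (Set.range fun x : b => castQ I x) := by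
    rw [← (Pi.basisFun ℚ I).span_eq, Submodule.span_le]
    rintro _ ⟨i, rfl⟩
    have := htb ⟨Pi.single i 1, Or.inr ⟨i, rfl⟩, rfl⟩
    rw [Set.image_eq_range] at this
    convert this using 1
    ext j
    by_cases h : i = j <;> simp [castQ, h, eq_comm]
  let bas : Module.Basis b ℚ (I → ℚ) := Module.Basis.mk hb hspan
  let e : b ≃ I := bas.indexEquiv (Pi.basisFun ℚ I)
  let w : I → (I → ℤ) := fun i => (e.symm i : I → ℤ)
  have hwb : ∀ i, w i ∈ b := fun i => (e.symm i).2
  have hwQ : LinearIndependent ℚ (fun i => castQ I (w i)) := hb.comp _ e.symm.injective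
  have hwZ : LinearIndependent ℤ w :=
    LinearIndependent.of_comp (castQ I) (hwQ.restrict_scalars' ℤ)
  let bN := Module.Basis.span hwZ
  have hdet := Submodule.natAbs_det_basis_change (Pi.basisFun ℤ I) _ bN
  have hcoe : (((↑) : Submodule.span ℤ (Set.range w) → (I → ℤ)) ∘ bN) = w := by
    ext i; simp [bN, Module.Basis.span_apply]
  rw [hcoe, Module.Basis.det_apply] at hdet
  have hmat : (Pi.basisFun ℤ I).toMatrix w = (Matrix.of w).transpose := by
    ext i j; simp [Module.Basis.toMatrix_apply]
  rw [hmat, Matrix.det_transpose] at hdet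
  refine ⟨Submodule.span ℤ (Set.range w), ?_, ?_, ?_⟩
  · apply Nat.finite_of_card_ne_zero
    rw [← hdet, Int.natAbs_ne_zero]
    intro h0
    have h1 : ((Matrix.of w).map (Int.castRingHom ℚ)).det = 0 := by
      rw [← RingHom.mapMatrix_apply, ← RingHom.map_det, h0]; simp
    have h2 : LinearIndependent ℚ ((Matrix.of w).map (Int.castRingHom ℚ)).row := hwQ
    rw [Matrix.linearIndependent_rows_iff_isUnit, Matrix.isUnit_iff_isUnit_det, h1] at h2
    simp at h2
  · rw [← hdet]
    refine det_bound _ _ fun i => ?_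
    rcases hbt (hwb i) with h | ⟨j, hj⟩
    · exact hS _ (hBS h)
    · refine le_trans (le_of_eq ?_) hL
      simp only [Matrix.of_apply, ← hj]
      rw [Finset.sum_eq_single j] <;> simp +contextual
  · intro x k hk hkx hx
    obtain ⟨c, hc⟩ := (Submodule.mem_span_range_iff_exists_fun ℤ).1 hx
    have h1 : castQ I x ∈ Submodule.span ℚ (castQ I '' B) := by
      have h2 : Submodule.span ℤ S ≤
          ((Submodule.span ℚ (castQ I '' B)).restrictScalars ℤ).comap (castQ I) := by
        rw [Submodule.span_le]
        intro s hs
        exact hSB ⟨s, hs, rfl⟩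
      have h3 := h2 hkx
      simp only [Submodule.mem_comap, map_smul, Submodule.restrictScalars_mem] at h3
      have h4 := Submodule.smul_mem _ ((k : ℚ)⁻¹) h3
      rw [← Int.cast_smul_eq_zsmul ℚ, inv_smul_smul₀ (by exact_mod_cast hk)] at h4
      exact h4
    let bas' := bas.reindex e
    have hbas' : ∀ i, bas' i = castQ I (w i) := fun i => by
      simp only [bas', bas, w, Module.Basis.reindex_apply]
      exact Module.Basis.mk_apply hb hspan _
    have h5 : castQ I '' B = bas' '' {i | w i ∈ B} := by
      ext y
      constructor
      · rintro ⟨u, hu, rfl⟩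
        refine ⟨e ⟨u, hBb hu⟩, by simpa [w] using hu, by rw [hbas']; simp [w]⟩
      · rintro ⟨i, hi, rfl⟩
        exact ⟨w i, hi, (hbas' i).symm⟩
    rw [h5, Module.Basis.mem_span_image] at h1
    have h6 : ∀ i, bas'.repr (castQ I x) i = c i := by
      intro i
      have : castQ I x = ∑ i, (c i : ℚ) • bas' i := by
        rw [← hc, map_sum]
        refine Finset.sum_congr rfl fun i _ => ?_
        rw [hbas', map_smul, Int.cast_smul_eq_zsmul]
      rw [this, Module.Basis.repr_sum_self]
    rw [← hc]
    refine Submodule.sum_mem _ fun i _ => ?_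
    by_cases hi : c i = 0
    · simp [hi]
    · refine Submodule.smul_mem _ _ (Submodule.subset_span (hBS (h1 ?_)))
      simp [h6, hi]

section
variable {α X A : Type*} [AddCommGroup A] (π : FreeGroup α →* Equiv.Perm X) (e : X → α → A)

/-- lift of the action to the trivial cover with holonomy `e` -/
def covAct : FreeGroup α →* Equiv.Perm (X × A) :=
  FreeGroup.lift fun i =>
    { toFun := fun p => (π (.of i) p.1, e p.1 i + p.2)
      invFun := fun p => ((π (.of i))⁻¹ p.1, -e ((π (.of i))⁻¹ p.1) i + p.2)
      left_inv := fun p => by simp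
      right_inv := fun p => by simp }

/-- the associated cocycle -/
def cocyc (w : FreeGroup α) (x : X) : A := (covAct π e w (x, 0)).2

theorem covAct_apply (w : FreeGroup α) : ∀ x a,
    covAct π e w (x, a) = (π w x, cocyc π e w x + a) := by
  have key : ∃ c : X → A, ∀ x a, covAct π e w (x, a) = (π w x, c x + a) := by
    induction w using FreeGroup.induction_on with
    | C1 => exact ⟨0, by simp⟩
    | of i => exact ⟨fun x => e x i, by simp [covAct]⟩
    | inv_of i _ => exact ⟨fun x => -e ((π (.of i))⁻¹ x) i, fun x a => by
        rw [map_inv, covAct, FreeGroup.lift_apply_of, map_inv]; rfl⟩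
    | mul u v hu hv =>
      obtain ⟨c, hc⟩ := hu
      obtain ⟨d, hd⟩ := hv
      exact ⟨fun x => c (π v x) + d x, fun x a => by simp [hc, hd, add_assoc]⟩
  obtain ⟨c, hc⟩ := key
  intro x a
  simp [cocyc, hc]

theorem cocyc_one (x : X) : cocyc π e 1 x = 0 := by simp [cocyc]

theorem cocyc_mul (u v : FreeGroup α) (x : X) :
    cocyc π e (u * v) x = cocyc π e u (π v x) + cocyc π e v x := by
  have := covAct_apply π e (u * v) x 0
  rw [map_mul, Equiv.Perm.mul_apply, covAct_apply, covAct_apply] at this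
  simpa using (congrArg Prod.snd this).symm

theorem cocyc_of (i : α) (x : X) : cocyc π e (.of i) x = e x i := by
  simp [cocyc, covAct]

theorem cocyc_inv (u : FreeGroup α) (x : X) :
    cocyc π e u⁻¹ x = - cocyc π e u ((π u)⁻¹ x) := by
  have := cocyc_mul π e u u⁻¹ x
  rw [mul_inv_cancel, cocyc_one, map_inv] at this
  exact eq_neg_of_add_eq_zero_right this.symm

theorem cocyc_unique (c : FreeGroup α → X → A) (h1 : ∀ i x, c (.of i) x = e x i)
    (hm : ∀ u v x, c (u * v) x = c u (π v x) + c v x) (w : FreeGroup α) (x : X) :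
    cocyc π e w x = c w x := by
  have h0 : ∀ x, c 1 x = 0 := fun x => by
    have := hm 1 1 x
    simpa using this
  induction w using FreeGroup.induction_on generalizing x with
  | C1 => rw [cocyc_one, h0]
  | of i => rw [cocyc_of, h1]
  | inv_of i _ =>
    have := hm (.of i) (.of i)⁻¹ x
    rw [mul_inv_cancel, h0, map_inv, h1] at this
    rw [cocyc_inv, cocyc_of]
    exact (eq_neg_of_add_eq_zero_right this.symm).symm
  | mul u v hu hv => rw [cocyc_mul, hm, hu, hv]

theorem cocyc_map {B : Type*} [AddCommGroup B] (f : A →+ B) (w : FreeGroup α) (x : X) :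
    cocyc π (fun x i => f (e x i)) w x = f (cocyc π e w x) :=
  cocyc_unique π _ (fun w x => f (cocyc π e w x)) (fun i x => by rw [cocyc_of])
    (fun u v x => by rw [cocyc_mul, map_add]) w x

theorem cocyc_rel (rels : Set (FreeGroup α)) (hπ : ∀ r ∈ rels, π r = 1)
    (hr : ∀ r ∈ rels, ∀ x, cocyc π e r x = 0) (w : FreeGroup α)
    (hw : w ∈ Subgroup.normalClosure rels) (x : X) : cocyc π e w x = 0 := by
  have : Subgroup.normalClosure rels ≤ (covAct π e).ker := by
    apply Subgroup.normalClosure_le_normal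
    intro r h
    ext1 p
    rw [covAct_apply, hπ r h, hr r h]
    simp
  have h2 := this hw
  rw [MonoidHom.mem_ker] at h2
  simp [cocyc, h2]

end

section
variable {α X : Type*} [Fintype X] [DecidableEq X] [Fintype α] [DecidableEq α]

/-- universal labelling -/
def uni (X α : Type*) [DecidableEq X] [DecidableEq α] : X → α → (X × α → ℤ) :=
  fun x i => Pi.single (x, i) 1

theorem uni_bound (π : FreeGroup α →* Equiv.Perm X) (w : FreeGroup α) (x : X) :
    ∑ j, (cocyc π (uni X α) w x j).natAbs ≤ w.norm := by
  have hw : ∀ (l : List (α × Bool)) (x : X),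
      ∑ j, (cocyc π (uni X α) (FreeGroup.mk l) x j).natAbs ≤ l.length := by
    intro l
    induction l with
    | nil => intro x; rw [← FreeGroup.one_eq_mk, cocyc_one]; simp
    | cons a l ih =>
      intro x
      have h1 : FreeGroup.mk (a :: l) = FreeGroup.mk [a] * FreeGroup.mk l := by simp
      have h3 : ∀ p : X × α, ∑ j, ((Pi.single p 1 : X × α → ℤ) j).natAbs = 1 := fun p => by
        rw [Finset.sum_eq_single p] <;> simp +contextual
      have h2 : ∀ y, ∑ j, (cocyc π (uni X α) (FreeGroup.mk [a]) y j).natAbs ≤ 1 := by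
        intro y
        rcases a with ⟨i, b⟩
        cases b
        · have : FreeGroup.mk [(i, false)] = (FreeGroup.of i)⁻¹ := rfl
          rw [this, cocyc_inv, cocyc_of]
          simp only [uni, Pi.neg_apply, Int.natAbs_neg]
          exact (h3 _).le
        · change ∑ j, (cocyc π (uni X α) (FreeGroup.of i) y j).natAbs ≤ 1
          rw [cocyc_of]
          exact (h3 _).le
      rw [h1, cocyc_mul]
      calc _ ≤ ∑ j, ((cocyc π (uni X α) (FreeGroup.mk [a]) (π (FreeGroup.mk l) x) j).natAbs +
            (cocyc π (uni X α) (FreeGroup.mk l) x j).natAbs) :=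
            Finset.sum_le_sum fun j _ => Int.natAbs_add_le _ _
        _ ≤ 1 + l.length := by
            rw [Finset.sum_add_distrib]; exact add_le_add (h2 _) (ih x)
        _ = _ := by simp [add_comm]
  have := hw w.toWord x
  rwa [FreeGroup.mk_toWord] at this
end

theorem main_bound {G : Type*} [Group G] {n : ℕ} (rels : Set (FreeGroup (Fin n)))
    (p : FreeGroup (Fin n) →* G) (hp : Function.Surjective p)
    (hker : p.ker = Subgroup.normalClosure rels) (L : ℕ) (hL : 1 ≤ L)
    (hrel : ∀ r ∈ rels, r.norm ≤ L) (H : Subgroup G) (hH : H.index ≠ 0) :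
    Nat.card (CommGroup.torsion (Abelianization H)) ≤ L ^ (H.index * n) := by
  classical
  have : H.FiniteIndex := ⟨hH⟩
  let X := G ⧸ H
  let _ : Fintype X := Fintype.ofFinite _
  let π : FreeGroup (Fin n) →* Equiv.Perm X := (MulAction.toPermHom G X).comp p
  have hπ : ∀ w x, π w x = p w • x := fun w x => rfl
  have hp1 : ∀ r ∈ rels, p r = 1 := fun r hr => by
    rw [← MonoidHom.mem_ker, hker]; exact Subgroup.subset_normalClosure hr
  have hπ1 : ∀ r ∈ rels, π r = 1 := fun r hr => by
    ext1 x; rw [hπ, hp1 r hr, one_smul]; rfl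
  let S : Set (X × Fin n → ℤ) := {v | ∃ r ∈ rels, ∃ x, v = cocyc π (uni X (Fin n)) r x}
  let Λ : Submodule ℤ (X × Fin n → ℤ) := Submodule.span ℤ S
  obtain ⟨N, hfin, hcard, hN⟩ := lattice_bound S L hL (by
    rintro _ ⟨r, hr, x, rfl⟩
    exact (uni_bound π r x).trans (hrel r hr))
  -- the cocycle with values in `Additive (Abelianization H)`
  have hmem : ∀ (g : G) (x : X), (g • x).out⁻¹ * g * x.out ∈ H := fun g x => by
    rw [mul_assoc, ← QuotientGroup.eq, QuotientGroup.out_eq', ← smul_eq_mul,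
      ← MulAction.Quotient.smul_coe, QuotientGroup.out_eq']
  let cH : G → X → H := fun g x => ⟨(g • x).out⁻¹ * g * x.out, hmem g x⟩
  have hcH : ∀ g g' x, cH (g * g') x = cH g (g' • x) * cH g' x := fun g g' x => by
    ext; simp [cH, mul_smul, mul_assoc]
  let c : FreeGroup (Fin n) → X → Additive (Abelianization H) :=
    fun w x => Additive.ofMul (Abelianization.of (cH (p w) x))
  have hcm : ∀ u v x, c (u * v) x = c u (π v x) + c v x := fun u v x => by
    simp only [c, map_mul, hcH, ofMul_mul, hπ]
  let f : (X × Fin n → ℤ) →ₗ[ℤ] Additive (Abelianization H) :=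
    Fintype.linearCombination ℤ (fun q : X × Fin n => c (.of q.2) q.1)
  have hf : ∀ w x, f (cocyc π (uni X (Fin n)) w x) = c w x := fun w x => by
    have h1 := cocyc_map π (uni X (Fin n)) f.toAddMonoidHom w x
    rw [cocyc_unique π _ c (fun i x => ?_) hcm] at h1
    · exact h1.symm
    · simp [f, uni, Fintype.linearCombination_apply_single]
  have hfΛ : Λ ≤ LinearMap.ker f := by
    rw [Submodule.span_le]
    rintro _ ⟨r, hr, x, rfl⟩
    have : cH 1 x = 1 := by ext; simp [cH]
    simp [hf, c, hp1 r hr, this]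
  -- the cocycle with values in the quotient
  let eM : X → Fin n → ((X × Fin n → ℤ) ⧸ Λ) := fun x i => Λ.mkQ (uni X (Fin n) x i)
  have heM : ∀ w x, cocyc π eM w x = Λ.mkQ (cocyc π (uni X (Fin n)) w x) := fun w x =>
    cocyc_map π (uni X (Fin n)) Λ.mkQ.toAddMonoidHom w x
  have hker0 : ∀ w, p w = 1 → ∀ x, cocyc π eM w x = 0 := fun w hw =>
    cocyc_rel π eM rels hπ1 (fun r hr x => by
      rw [heM, Submodule.mkQ_apply, Submodule.Quotient.mk_eq_zero]
      exact Submodule.subset_span ⟨r, hr, x, rfl⟩) w (by rw [← hker]; exact hw)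
  let x0 : X := ((1 : G) : G ⧸ H)
  have hx0 : ∀ h : H, (h : G) • x0 = x0 := fun h => by
    change (((h : G) • (1 : G) : G) : G ⧸ H) = ((1 : G) : G ⧸ H)
    rw [eq_comm, QuotientGroup.eq]; simp
  choose l hl using hp
  have hwd : ∀ u v, p u = p v → ∀ x, cocyc π eM u x = cocyc π eM v x := fun u v huv x => by
    have h1 := cocyc_mul π eM (u * v⁻¹) v x
    rw [inv_mul_cancel_right, hker0 (u * v⁻¹) (by simp [huv]), zero_add] at h1
    exact h1
  let φ : H →* Multiplicative ((X × Fin n → ℤ) ⧸ Λ) :=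
    { toFun := fun h => Multiplicative.ofAdd (cocyc π eM (l h) x0)
      map_one' := by
        rw [hker0 _ (by simp [hl])]; rfl
      map_mul' := fun a b => by
        rw [hwd (l ↑(a * b)) (l a * l b) (by simp [hl]), cocyc_mul, hπ, hl, hx0]; rfl }
  let Φ : Abelianization H →* Multiplicative ((X × Fin n → ℤ) ⧸ Λ) := Abelianization.lift φ
  let f' : ((X × Fin n → ℤ) ⧸ Λ) →ₗ[ℤ] Additive (Abelianization H) := Λ.liftQ f hfΛ
  have hinv : ∀ t : Abelianization H, f' (Multiplicative.toAdd (Φ t)) = Additive.ofMul t := by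
    intro t
    obtain ⟨h, rfl⟩ := QuotientGroup.mk_surjective t
    change f' (cocyc π eM (l h) x0) = Additive.ofMul (Abelianization.of h)
    rw [heM, Submodule.mkQ_apply, Submodule.liftQ_apply, hf]
    have hs : x0.out ∈ H := by
      have := QuotientGroup.out_eq' x0
      rw [eq_comm, QuotientGroup.eq] at this
      simpa using this
    have : cH (p (l h)) x0 = (⟨x0.out, hs⟩ : H)⁻¹ * h * ⟨x0.out, hs⟩ := by
      ext; simp [cH, hl, hx0]
    simp only [c, this, map_mul, map_inv]
    congr 1
    rw [mul_comm, mul_inv_cancel_left]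
  choose rep hrep using Submodule.mkQ_surjective Λ
  let ψ : CommGroup.torsion (Abelianization H) → (X × Fin n → ℤ) ⧸ N :=
    fun t => N.mkQ (rep (Multiplicative.toAdd (Φ t)))
  have htors : ∀ t : CommGroup.torsion (Abelianization H), ∃ k : ℤ, k ≠ 0 ∧
      k • rep (Multiplicative.toAdd (Φ t)) ∈ Λ := by
    rintro ⟨t, ht⟩
    obtain ⟨k, hk, hkt⟩ := isOfFinOrder_iff_pow_eq_one.1 ht
    refine ⟨k, by exact_mod_cast hk.ne', ?_⟩
    rw [← Submodule.Quotient.mk_eq_zero, ← Submodule.mkQ_apply, map_smul, hrep]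
    have := congrArg (fun z => Multiplicative.toAdd (Φ z)) hkt
    simpa using this
  have hψ : Function.Injective ψ := by
    intro s t hst
    obtain ⟨k, hk, hks⟩ := htors s
    obtain ⟨m, hm, hmt⟩ := htors t
    have h1 : rep (Multiplicative.toAdd (Φ s)) - rep (Multiplicative.toAdd (Φ t)) ∈ Λ := by
      refine hN _ (k * m) (mul_ne_zero hk hm) ?_ ((Submodule.Quotient.eq N).1 hst)
      rw [smul_sub]
      refine Submodule.sub_mem _ ?_ ?_
      · rw [mul_comm, mul_smul]; exact Submodule.smul_mem _ _ hks
      · rw [mul_smul]; exact Submodule.smul_mem _ _ hmt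
    have h2 := (Submodule.Quotient.eq Λ).2 h1
    rw [← Submodule.mkQ_apply, ← Submodule.mkQ_apply, hrep, hrep] at h2
    have h3 := congrArg f' h2
    rw [hinv, hinv] at h3
    exact Subtype.ext h3
  refine (Nat.card_le_card_of_injective ψ hψ).trans (hcard.trans (le_of_eq ?_))
  rw [Fintype.card_prod, Fintype.card_fin, ← Nat.card_eq_fintype_card]
  rfl

theorem stmt_5 (G : Type*) [Group G] (hG : IsFinitelyPresented G) :
    ∃ C : ℕ, ∀ H : Subgroup G, H.index ≠ 0 →
      Nat.card (CommGroup.torsion (Abelianization H)) ≤ C ^ H.index := by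
  obtain ⟨n, rels, hfin, ⟨e⟩⟩ := hG
  let L := 1 + ∑ r ∈ hfin.toFinset, r.norm
  refine ⟨L ^ n, fun H hH => ?_⟩
  rw [← pow_mul, mul_comm]
  refine main_bound rels (e.symm.toMonoidHom.comp (PresentedGroup.mk rels))
    (e.symm.surjective.comp (PresentedGroup.mk_surjective rels)) ?_ L (Nat.le_add_right _ _)
    (fun r hr => ?_) H hH
  · ext w
    simp [MonoidHom.mem_ker, PresentedGroup.mk_eq_one_iff]
  · exact (Finset.single_le_sum (f := fun r : FreeGroup (Fin n) => r.norm)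
      (fun _ _ => Nat.zero_le _) (hfin.mem_toFinset.2 hr)).trans (Nat.le_add_left _ _)
end

section
/- Let G be a finitely generated metabelian group. There is a constant D depending only on G such that t(H^{ab}) < D^{[G:H]} for every subgroup H of finite index in G. -/
/-- A group is metabelian if its derived subgroup is abelian. -/
def IsMetabelian (G : Type*) [Group G] : Prop :=
  ∀ x ∈ ⁅(⊤ : Subgroup G), (⊤ : Subgroup G)⁆, ∀ y ∈ ⁅(⊤ : Subgroup G), (⊤ : Subgroup G)⁆,
    x * y = y * x


theorem aux_det_bound {X : Type*} [Fintype X] [DecidableEq X] (M : Matrix X X ℤ) (C : ℕ)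
    (h : ∀ i, ∑ j, (M i j).natAbs ≤ C) : M.det.natAbs ≤ C ^ Fintype.card X := by
  rw [← Matrix.det_transpose, Matrix.det_apply]
  calc _ ≤ ∑ σ : Equiv.Perm X, ∏ i, (M i (σ i)).natAbs := by
        refine (Int.natAbs_sum_le _ _).trans (Finset.sum_le_sum fun σ _ => ?_)
        have hp : (∏ i, (M i (σ i)).natAbs) = (∏ i, M i (σ i)).natAbs :=
          (map_prod Int.natAbsHom _ _).symm
        rw [hp]
        rcases Int.units_eq_one_or (Equiv.Perm.sign σ) with h | h <;> simp [h, Units.smul_def]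
    _ ≤ ∑ f : X → X, ∏ i, (M i (f i)).natAbs := by
        have : Function.Injective (fun σ : Equiv.Perm X => (σ : X → X)) := DFunLike.coe_injective
        rw [← Finset.sum_image (s := Finset.univ) (g := fun σ : Equiv.Perm X => (σ : X → X))
          (f := fun f : X → X => ∏ i, (M i (f i)).natAbs) (fun a _ b _ h => this h)]
        exact Finset.sum_le_sum_of_subset (Finset.subset_univ _)
    _ = ∏ i, ∑ j, (M i j).natAbs := by
        rw [Finset.prod_univ_sum]; simp
    _ ≤ ∏ _i : X, C := Finset.prod_le_prod' fun i _ => h i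
    _ = _ := by simp

/-- the relation lattice has bounded index in its saturation -/
theorem aux_tors {X : Type*} [Fintype X] [DecidableEq X] (C : ℕ) (hC : 1 ≤ C)
    (s : Set (X → ℤ)) (hs : ∀ v ∈ s, ∑ j, (v j).natAbs ≤ C) :
    ∃ L : AddSubgroup (X → ℤ), L.index ≠ 0 ∧ L.index ≤ C ^ Fintype.card X ∧
      ∀ z ∈ L, (∃ k : ℕ, k ≠ 0 ∧ k • z ∈ AddSubgroup.closure s) → z ∈ AddSubgroup.closure s := by
  classical
  let ι : (X → ℤ) →ₗ[ℤ] (X → ℚ) :=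
    { toFun := fun v x => (v x : ℚ), map_add' := by intros; ext; simp,
      map_smul' := by intros; ext; simp }
  have ιinj : Function.Injective ι := by
    intro a b h
    ext x
    have := congrFun h x
    simpa [ι] using this
  let std : Set (X → ℤ) := Set.range fun x => Pi.single x 1
  obtain ⟨b, hbs, hbspan, hbli⟩ := exists_linearIndependent ℚ (ι '' s)
  obtain ⟨b', hbb', hb', hspan, hli⟩ := exists_linearIndepOn_id_extension (K := ℚ) hbli
    (Set.subset_union_left (t := ι '' std))
  have htop : Submodule.span ℚ b' = ⊤ := by
    rw [eq_top_iff, ← (Pi.basisFun ℚ X).span_eq, Submodule.span_le]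
    rintro _ ⟨x, rfl⟩
    apply hspan
    right
    refine ⟨_, ⟨x, rfl⟩, ?_⟩
    ext y
    simp [ι, Pi.single_apply]
  let B : Module.Basis b' ℚ (X → ℚ) := Module.Basis.mk hli (by simp [htop])
  have : Fintype b' := @Fintype.ofFinite _ (Module.Finite.finite_basis B)
  let e : b' ≃ X := B.indexEquiv (Pi.basisFun ℚ X)
  have hw : ∀ y : b', ∃ w : X → ℤ, ι w = y ∧ ∑ j, (w j).natAbs ≤ C ∧ ((y : X → ℚ) ∈ b → w ∈ s) := by
    rintro ⟨y, hy⟩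
    by_cases hyb : y ∈ b
    · obtain ⟨w, hws, hw⟩ := hbs hyb
      exact ⟨w, hw, hs w hws, fun _ => hws⟩
    · rcases hbb' hy with h | ⟨w, ⟨x, rfl⟩, hw⟩
      · exact absurd h hyb
      · refine ⟨_, hw, ?_, fun h => absurd h hyb⟩
        simp [Pi.single_apply, apply_ite Int.natAbs]
        exact hC
  choose w hwι hwC hws using hw
  have hwli : LinearIndependent ℤ w := by
    have h1 : LinearIndependent ℤ (fun y : b' => (y : X → ℚ)) := hli.restrict_scalars (by
      intro a b h; simpa using h)
    have : (fun y : b' => (y : X → ℚ)) = ι ∘ w := by ext y; simp [hwι]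
    rw [this] at h1
    exact h1.of_comp ι
  let L := Submodule.span ℤ (Set.range w)
  let BL : Module.Basis X ℤ L := (Module.Basis.span hwli).reindex e
  have hidx := Submodule.natAbs_det_basis_change (Pi.basisFun ℤ X) L BL
  have hBL : (fun i => (BL i : X → ℤ)) = fun i => w (e.symm i) := by
    ext i; simp [BL, Module.Basis.span_apply]
  have hBL' : ((↑) ∘ BL : X → X → ℤ) = fun i => w (e.symm i) := hBL
  rw [hBL'] at hidx
  have hidx2 : L.toAddSubgroup.index = Nat.card ((X → ℤ) ⧸ L) := rfl
  have hd : ((Pi.basisFun ℤ X).det fun i => w (e.symm i)) =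
     (Matrix.of fun i => w (e.symm i)).det := by
    rw [Module.Basis.det_apply, ← Matrix.det_transpose]; rfl
  refine ⟨L.toAddSubgroup, ?_, ?_, ?_⟩
  · rw [hidx2, ← hidx, hd]
    rw [Int.natAbs_ne_zero]
    have := (Matrix.linearIndependent_rows_iff_isUnit
      (A := (Matrix.of fun i => w (e.symm i)).map (Int.cast : ℤ → ℚ))).1 (by
        have h2 := hli.comp e.symm e.symm.injective
        have h4 : ((Matrix.of fun i => w (e.symm i)).map (Int.cast : ℤ → ℚ)).row =
            ((fun x : b' => id (x : X → ℚ)) ∘ e.symm) := by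
          ext i j
          simp [← hwι, ι, Matrix.row]
        rw [h4]
        exact h2)
    rw [Matrix.isUnit_iff_isUnit_det, isUnit_iff_ne_zero] at this
    intro h0
    apply this
    have h3 := (Int.castRingHom ℚ).map_det (Matrix.of fun i => w (e.symm i))
    rw [h0] at h3
    simpa using h3.symm
  · rw [hidx2, ← hidx, hd]
    exact aux_det_bound _ _ fun i => hwC _
  · rintro z hz ⟨k, hk, hkz⟩
    have hz' : z ∈ Submodule.span ℤ (Set.range w) := hz
    obtain ⟨c, hc⟩ := (Submodule.mem_span_range_iff_exists_fun ℤ).1 hz'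
    have hιz : ι z ∈ Submodule.span ℚ b := by
      rw [hbspan]
      have h1 : ι (k • z) ∈ Submodule.span ℚ (ι '' s) := by
        generalize k • z = u at hkz
        induction hkz using AddSubgroup.closure_induction with
        | mem x hx => exact Submodule.subset_span ⟨x, hx, rfl⟩
        | zero => simp
        | add x y _ _ hx hy => rw [map_add]; exact add_mem hx hy
        | neg x _ hx => rw [map_neg]; exact neg_mem hx
      have h2 : ι z = (k : ℚ)⁻¹ • ι (k • z) := by
        rw [map_nsmul, ← Nat.cast_smul_eq_nsmul ℚ, smul_smul, inv_mul_cancel₀ (by exact_mod_cast hk), one_smul]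
      rw [h2]
      exact Submodule.smul_mem _ _ h1
    have hrepr : ι z = ∑ y, (c y : ℚ) • B y := by
      rw [← hc, map_sum]
      refine Finset.sum_congr rfl fun y _ => ?_
      rw [map_smul, hwι]
      have : B y = y := by simp [B]
      rw [this, Int.cast_smul_eq_zsmul]
    have hcz : ∀ y : b', (y : X → ℚ) ∉ b → c y = 0 := by
      intro y hy
      have h1 : B.repr (ι z) y = c y := by
        rw [hrepr, B.repr_sum_self]
      have h2 : ι z ∈ Submodule.span ℚ (B '' {y | (y : X → ℚ) ∈ b}) := by
        convert hιz using 2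
        ext u
        constructor
        · rintro ⟨y, hy, rfl⟩; simpa [B] using hy
        · intro hu; exact ⟨⟨u, hb' hu⟩, hu, by simp [B]⟩
      rw [B.mem_span_image] at h2
      have h3 : B.repr (ι z) y = 0 := by
        by_contra hne
        exact hy (h2 (by simpa using hne))
      rw [h1] at h3
      exact_mod_cast h3
    rw [← hc]
    refine sum_mem fun y _ => ?_
    by_cases hy : (y : X → ℚ) ∈ b
    · exact AddSubgroup.zsmul_mem _ (AddSubgroup.subset_closure (hws y hy)) _
    · rw [hcz y hy, zero_smul]; exact zero_mem _

section Deriv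
variable (G : Type*) [Group G]

/-- the group ring of the abelianization -/
noncomputable abbrev RQ := MonoidAlgebra ℤ (Abelianization G)

/-- the relations of the universal derivation module -/
noncomputable def derivRel : Submodule (RQ G) (G →₀ RQ G) :=
  Submodule.span (RQ G) (Set.range fun p : G × G =>
    Finsupp.single (p.1 * p.2) (1 : RQ G) - Finsupp.single p.1 1 -
      Finsupp.single p.2 (MonoidAlgebra.of ℤ _ (Abelianization.of p.1)))

/-- the universal derivation module -/
abbrev DMod := (G →₀ RQ G) ⧸ derivRel G

variable {G}

/-- the universal derivation -/
noncomputable def dU (g : G) : DMod G := (derivRel G).mkQ (Finsupp.single g 1)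

theorem dU_mul (g h : G) :
    dU (g * h) = dU g + (MonoidAlgebra.of ℤ _ (Abelianization.of g) : RQ G) • dU h := by
  rw [← sub_eq_zero, ← sub_sub]
  unfold dU
  rw [← map_smul, ← map_sub, ← map_sub, Finsupp.smul_single, smul_eq_mul, mul_one]
  exact (Submodule.Quotient.mk_eq_zero _).2 (Submodule.subset_span ⟨(g, h), rfl⟩)

theorem dU_one : dU (1 : G) = 0 := by
  have := dU_mul (1 : G) 1
  rw [map_one, map_one, one_smul, mul_one] at this
  simpa using this

theorem span_dU : Submodule.span (RQ G) (Set.range (dU : G → DMod G)) = ⊤ := by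
  rw [eq_top_iff]
  rintro x -
  obtain ⟨y, rfl⟩ := (derivRel G).mkQ_surjective x
  induction y using Finsupp.induction_linear with
  | zero => simp
  | add a b ha hb => rw [map_add]; exact add_mem ha hb
  | single g a =>
    have : (derivRel G).mkQ (Finsupp.single g a) = a • dU g := by
      unfold dU
      rw [← map_smul, Finsupp.smul_single, smul_eq_mul, mul_one]
    rw [this]
    exact Submodule.smul_mem _ _ (Submodule.subset_span ⟨g, rfl⟩)

instance [Group.FG G] : Module.Finite (RQ G) (DMod G) := by
  obtain ⟨S, hS⟩ := Group.fg_def.1 (inferInstance : Group.FG G)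
  classical
  refine ⟨⟨S.image dU, ?_⟩⟩
  rw [eq_top_iff, ← span_dU, Submodule.span_le]
  rintro _ ⟨g, rfl⟩
  have hg : g ∈ Subgroup.closure (S : Set G) := by rw [hS]; trivial
  induction hg using Subgroup.closure_induction with
  | mem x hx => exact Submodule.subset_span (by simpa using ⟨x, hx, rfl⟩)
  | one => rw [dU_one]; exact zero_mem _
  | mul x y _ _ hx hy => rw [dU_mul]; exact add_mem hx (Submodule.smul_mem _ _ hy)
  | inv x _ hx =>
    have h := dU_mul x⁻¹ x
    rw [inv_mul_cancel, dU_one] at h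
    rw [eq_neg_of_add_eq_zero_left h.symm]
    exact neg_mem (Submodule.smul_mem _ _ hx)

/-- universal property -/
theorem exists_lift {W : Type*} [AddCommGroup W] [Module (RQ G) W] (D : G → W)
    (hD : ∀ g h, D (g * h) = D g + (MonoidAlgebra.of ℤ _ (Abelianization.of g) : RQ G) • D h) :
    ∃ φ : DMod G →ₗ[RQ G] W, ∀ g, φ (dU g) = D g := by
  let φ0 : (G →₀ RQ G) →ₗ[RQ G] W := Finsupp.linearCombination (RQ G) D
  refine ⟨(derivRel G).liftQ φ0 ?_, fun g => ?_⟩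
  · unfold derivRel
    rw [Submodule.span_le]
    rintro _ ⟨⟨g, h⟩, rfl⟩
    simp [φ0, Finsupp.linearCombination_single, hD]
  · simp [dU, φ0, Finsupp.linearCombination_single]

instance [Group.FG G] : IsNoetherianRing (RQ G) := by
  have : Group.FG (Abelianization G) :=
    Group.fg_of_surjective (f := Abelianization.of) (QuotientGroup.mk'_surjective _)
  have : Monoid.FG (Abelianization G) := Group.fg_iff_monoid_fg.1 this
  exact Algebra.FiniteType.isNoetherianRing ℤ _

/-- The key detection: the derivation detects the commutator subgroup. -/
theorem detect (P : Subgroup (Abelianization G)) {r : ℕ} (f : (Fin r → RQ G) →ₗ[RQ G] DMod G)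
    (v : Fin r → RQ G)
    (hv : ∀ i, MonoidAlgebra.mapDomainRingHom ℤ (QuotientGroup.mk' P) (v i) = 0)
    (n : P.comap (Abelianization.of (G := G))) (hn : f v = dU (n : G)) :
    Abelianization.of n = 1 := by
  classical
  let N := P.comap (Abelianization.of (G := G))
  let T := Abelianization G ⧸ P
  let W := T → Additive (Abelianization N)
  let ρ : T →* Module.End ℤ W :=
    { toFun := fun t =>
        { toFun := fun F x => F (x * t), map_add' := fun _ _ => rfl, map_smul' := fun _ _ => rfl }
      map_one' := by ext F x; simp
      map_mul' := fun a b => by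
        refine LinearMap.ext fun F => funext fun x => ?_
        change F (x * (a * b)) = F (x * a * b)
        rw [mul_assoc] }
  let ρ' : MonoidAlgebra ℤ T →ₐ[ℤ] Module.End ℤ W := MonoidAlgebra.lift ℤ _ T ρ
  let π : RQ G →+* MonoidAlgebra ℤ T := MonoidAlgebra.mapDomainRingHom ℤ (QuotientGroup.mk' P)
  let _ : Module (RQ G) W := Module.compHom W (ρ'.toRingHom.comp π)
  have smul_def : ∀ (a : RQ G) (F : W), a • F = ρ' (π a) F := fun _ _ => rfl
  let p : G → T := fun g => QuotientGroup.mk (Abelianization.of g)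
  have hpm : ∀ g h, p (g * h) = p g * p h := fun g h => by simp [p]
  have hps : Function.Surjective p :=
    (QuotientGroup.mk_surjective).comp (QuotientGroup.mk_surjective)
  have hpN : ∀ g, p g = 1 → g ∈ N := fun g h => by
    exact (QuotientGroup.eq_one_iff (N := P) (Abelianization.of g)).1 h
  have hNp : ∀ g, g ∈ N → p g = 1 := fun g h =>
    (QuotientGroup.eq_one_iff (N := P) (Abelianization.of g)).2 h
  have hpi : ∀ g, p g⁻¹ = (p g)⁻¹ := fun g => by
    rw [eq_inv_iff_mul_eq_one, ← hpm]; simp [p]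
  choose s hs using hps
  have hmem : ∀ g x, s x * g * (s (x * p g))⁻¹ ∈ N := by
    intro g x
    apply hpN
    rw [hpm, hpm, hpi, hs, hs]
    simp
  let D : G → W := fun g x => Additive.ofMul (Abelianization.of (⟨_, hmem g x⟩ : N))
  obtain ⟨φ, hφ⟩ := exists_lift D (by
    intro g h
    rw [smul_def]
    have : π (MonoidAlgebra.of ℤ _ (Abelianization.of g)) = MonoidAlgebra.of ℤ T (p g) := by
      simp [π, p]
      rfl
    rw [this, MonoidAlgebra.lift_of]
    funext x
    change D (g * h) x = D g x + D h (x * p g)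
    change Additive.ofMul (Abelianization.of (⟨_, hmem (g * h) x⟩ : N)) =
      Additive.ofMul (Abelianization.of (⟨_, hmem g x⟩ : N) *
        Abelianization.of (⟨_, hmem h (x * p g)⟩ : N))
    rw [← map_mul]
    congr 2
    apply Subtype.ext
    change _ = (s x * g * (s (x * p g))⁻¹) * (s (x * p g) * h * (s (x * p g * p h))⁻¹)
    simp only [hpm, mul_assoc, inv_mul_cancel_left])
  have h0 : D n = 0 := by
    rw [← hφ, ← hn]
    have : v = ∑ i, v i • Pi.single i (1 : RQ G) := by
      ext1 j
      simp [Finset.sum_apply, Pi.single_apply]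
    rw [this, map_sum, map_sum]
    refine Finset.sum_eq_zero fun i _ => ?_
    rw [map_smul, map_smul, smul_def, show π (v i) = 0 from hv i]
    simp
  have h1 := congrFun h0 1
  have hs1 : s 1 ∈ N := hpN _ (hs 1)
  have h2 : Abelianization.of (⟨_, hmem n 1⟩ : N) = 1 := h1
  have h3 : (⟨_, hmem n 1⟩ : N) = ⟨s 1, hs1⟩ * n * ⟨s 1, hs1⟩⁻¹ := by
    apply Subtype.ext
    simp [hNp n n.2]
  rw [h3] at h2
  simpa [mul_comm] using h2

end Deriv

section Torsion
variable (G : Type*) [Group G]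

/-- reduction of vectors over the group ring modulo `P` -/
noncomputable def redP (P : Subgroup (Abelianization G)) (r : ℕ) :
    (Fin r → RQ G) →+ (Fin r × (Abelianization G ⧸ P) → ℤ) where
  toFun v x := (MonoidAlgebra.mapDomainRingHom ℤ (QuotientGroup.mk' P) (v x.1)).coeff x.2
  map_zero' := by ext x; simp
  map_add' a b := by
    ext x
    simp only [Pi.add_apply, map_add, MonoidAlgebra.coeff_add, Finsupp.add_apply]

variable {G}

theorem redP_apply (P : Subgroup (Abelianization G)) {r : ℕ} (v : Fin r → RQ G) (i t) :
    redP G P r v (i, t) =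
      (MonoidAlgebra.mapDomainRingHom ℤ (QuotientGroup.mk' P) (v i)).coeff t := rfl

theorem redP_smul (P : Subgroup (Abelianization G)) {r : ℕ} (q : Abelianization G) (hq : q ∈ P)
    (v : Fin r → RQ G) : redP G P r ((MonoidAlgebra.of ℤ _ q : RQ G) • v) = redP G P r v := by
  ext x
  have : QuotientGroup.mk' P q = 1 := (QuotientGroup.eq_one_iff q).2 hq
  have h2 : (MonoidAlgebra.mapDomainRingHom ℤ (QuotientGroup.mk' P)) (MonoidAlgebra.of ℤ _ q) = 1 := by
    have h3 : (q : Abelianization G ⧸ P) = 1 := this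
    simp [h3, MonoidAlgebra.one_def]
  simp only [redP, AddMonoidHom.coe_mk, ZeroHom.coe_mk, Pi.smul_apply, smul_eq_mul, map_mul, h2,
    one_mul]

/-- ℓ¹ norm -/
noncomputable def l1 {A : Type*} (a : MonoidAlgebra ℤ A) : ℕ := a.coeff.sum fun _ c => c.natAbs

theorem l1_map {A B : Type*} [Fintype B] (p : A → B) (a : MonoidAlgebra ℤ A) :
    ∑ t, ((MonoidAlgebra.mapDomain p a).coeff t).natAbs ≤ l1 a := by
  classical
  have h1 : ∀ t, ((MonoidAlgebra.mapDomain p a).coeff t).natAbs ≤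
      a.coeff.sum fun x c => if p x = t then c.natAbs else 0 := by
    intro t
    have : (MonoidAlgebra.mapDomain p a).coeff t = a.coeff.sum fun x c => if p x = t then c else 0 := by
      change (Finsupp.mapDomain p a.coeff) t = _
      rw [Finsupp.mapDomain, Finsupp.sum_apply]
      simp [Finsupp.single_apply]
    rw [this, Finsupp.sum, Finsupp.sum]
    refine (Int.natAbs_sum_le _ _).trans (le_of_eq (Finset.sum_congr rfl fun x _ => ?_))
    split_ifs <;> simp
  refine (Finset.sum_le_sum fun t _ => h1 t).trans (le_of_eq ?_)
  simp only [Finsupp.sum, l1]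
  rw [Finset.sum_comm]
  simp

theorem l1_of_mul {A : Type*} [Group A] (q : A) (a : MonoidAlgebra ℤ A) :
    l1 (MonoidAlgebra.of ℤ _ q * a) = l1 a := by
  have : MonoidAlgebra.of ℤ _ q * a = MonoidAlgebra.mapDomain (fun x => q * x) a := by
    induction a using MonoidAlgebra.induction_linear with
    | zero => simp
    | add f g hf hg => rw [mul_add, hf, hg, MonoidAlgebra.mapDomain_add]
    | single g b => simp
  rw [this]
  unfold l1
  change (Finsupp.mapDomain _ a.coeff).sum _ = _
  rw [Finsupp.sum_mapDomain_index_inj (mul_right_injective q)]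

theorem redP_l1 (P : Subgroup (Abelianization G)) [Fintype (Abelianization G ⧸ P)] {r : ℕ}
    (q : Abelianization G) (v : Fin r → RQ G) :
    ∑ j, (redP G P r ((MonoidAlgebra.of ℤ _ q : RQ G) • v) j).natAbs ≤ ∑ i, l1 (v i) := by
  rw [Fintype.sum_prod_type]
  refine Finset.sum_le_sum fun i _ => ?_
  have h := l1_map (QuotientGroup.mk' P) (MonoidAlgebra.of ℤ _ q * v i)
  rw [l1_of_mul q (v i)] at h
  refine le_trans (le_of_eq ?_) h
  refine Finset.sum_congr rfl fun t _ => ?_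
  rw [redP_apply]
  rfl

set_option maxHeartbeats 1000000 in
theorem torsion_bound [Group.FG G] : ∃ D : ℕ, 1 ≤ D ∧ ∀ P : Subgroup (Abelianization G),
    P.index ≠ 0 →
    Finite (CommGroup.torsion (Abelianization (P.comap (Abelianization.of (G := G))))) ∧
    Nat.card (CommGroup.torsion (Abelianization (P.comap (Abelianization.of (G := G))))) ≤
      D ^ P.index := by
  classical
  obtain ⟨r, f, hf⟩ := Module.Finite.exists_fin' (RQ G) (DMod G)
  obtain ⟨κ, hκ⟩ := IsNoetherian.noetherian (LinearMap.ker f)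
  let C : ℕ := 1 + ∑ v ∈ κ, ∑ i, l1 (v i)
  have hC : 1 ≤ C := by simp [C]
  refine ⟨C ^ r, Nat.one_le_pow _ _ hC, fun P hP => ?_⟩
  set N := P.comap (Abelianization.of (G := G)) with hN
  have : P.FiniteIndex := ⟨hP⟩
  have : Fintype (Abelianization G ⧸ P) := Fintype.ofFinite _
  let X := Fin r × (Abelianization G ⧸ P)
  let Ψ := redP G P r
  let s : Set (X → ℤ) := {z | ∃ q : Abelianization G, ∃ v ∈ κ, z = Ψ ((MonoidAlgebra.of ℤ _ q : RQ G) • v)}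
  have hs : ∀ z ∈ s, ∑ j, (z j).natAbs ≤ C := by
    rintro _ ⟨q, v, hv, rfl⟩
    calc _ ≤ ∑ i, l1 (v i) := redP_l1 P q v
      _ ≤ ∑ v ∈ κ, ∑ i, l1 (v i) :=
            Finset.single_le_sum (f := fun v : Fin r → RQ G => ∑ i, l1 (v i)) (fun _ _ => Nat.zero_le _) hv
      _ ≤ C := by simp [C]
  obtain ⟨L, hL0, hLC, hL⟩ := aux_tors C hC s hs
  let Λ := AddSubgroup.closure s
  have hsK : ∀ z ∈ Λ, ∃ v, f v = 0 ∧ Ψ v = z := by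
    intro z hz
    induction hz using AddSubgroup.closure_induction with
    | mem z hz =>
      obtain ⟨q, v, hv, rfl⟩ := hz
      refine ⟨_, ?_, rfl⟩
      have : v ∈ LinearMap.ker f := by rw [← hκ]; exact Submodule.subset_span hv
      rw [map_smul, LinearMap.mem_ker.1 this, smul_zero]
    | zero => exact ⟨0, by simp, by simp⟩
    | add a b _ _ ha hb =>
      obtain ⟨u, hu, rfl⟩ := ha
      obtain ⟨v, hv, rfl⟩ := hb
      exact ⟨u + v, by simp [hu, hv], by simp⟩
    | neg a _ ha =>
      obtain ⟨u, hu, rfl⟩ := ha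
      exact ⟨-u, by simp [hu], by simp⟩
  have hKs : ∀ v, f v = 0 → Ψ v ∈ Λ := by
    intro v hv
    have hv' : v ∈ Submodule.span (RQ G) (κ : Set (Fin r → RQ G)) := by rw [hκ]; exact hv
    clear hv
    induction hv' using Submodule.span_induction with
    | mem v hv =>
      apply AddSubgroup.subset_closure
      exact ⟨1, v, hv, by rw [map_one, one_smul]⟩
    | zero => simp
    | add a b _ _ ha hb => rw [map_add]; exact add_mem ha hb
    | smul a v hv ih =>
      have key : ∀ q : Abelianization G, Ψ ((MonoidAlgebra.of ℤ _ q : RQ G) • v) ∈ Λ := by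
        intro q
        clear ih
        induction hv using Submodule.span_induction generalizing q with
        | mem v hv => exact AddSubgroup.subset_closure ⟨q, v, hv, rfl⟩
        | zero => simp
        | add a b _ _ ha hb => rw [smul_add, map_add]; exact add_mem (ha q) (hb q)
        | smul a v hv ih =>
          rw [smul_smul]
          generalize (MonoidAlgebra.of ℤ _ q : RQ G) * a = c
          induction c using MonoidAlgebra.induction_linear with
          | zero => simp
          | add f g hf hg => rw [add_smul, map_add]; exact add_mem hf hg
          | single q' b =>
            have : (MonoidAlgebra.single q' b : RQ G) = b • MonoidAlgebra.of ℤ _ q' := by simp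
            rw [this, smul_assoc, map_zsmul]
            exact AddSubgroup.zsmul_mem _ (ih q') _
      induction a using MonoidAlgebra.induction_linear with
      | zero => simp
      | add f g hf hg => rw [add_smul, map_add]; exact add_mem hf hg
      | single q' b =>
        have : (MonoidAlgebra.single q' b : RQ G) = b • MonoidAlgebra.of ℤ _ q' := by simp
        rw [this, smul_assoc, map_zsmul]
        exact AddSubgroup.zsmul_mem _ (key q') _
  -- the induced map on the derivation module
  let ψ0 : (Fin r → RQ G) →+ ((X → ℤ) ⧸ Λ) := (QuotientAddGroup.mk' Λ).comp Ψ
  obtain ⟨ψ, hψ⟩ : ∃ ψ : DMod G →+ ((X → ℤ) ⧸ Λ), ∀ v, ψ (f v) = ψ0 v := by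
    refine ⟨f.toAddMonoidHom.liftOfSurjective hf ⟨ψ0, ?_⟩, fun v => ?_⟩
    · intro v hv
      exact (QuotientAddGroup.eq_zero_iff _).2 (hKs v hv)
    · exact AddMonoidHom.liftOfRightInverse_comp_apply _ _ _ ⟨ψ0, _⟩ v
  have hψP : ∀ q ∈ P, ∀ e, ψ ((MonoidAlgebra.of ℤ _ q : RQ G) • e) = ψ e := by
    intro q hq e
    obtain ⟨v, rfl⟩ := hf e
    rw [← map_smul, hψ, hψ]
    change QuotientAddGroup.mk' Λ (Ψ _) = QuotientAddGroup.mk' Λ (Ψ _)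
    rw [redP_smul P q hq v]
  let θ0 : N →* Multiplicative ((X → ℤ) ⧸ Λ) :=
    { toFun := fun n => Multiplicative.ofAdd (ψ (dU (n : G)))
      map_one' := by simp [dU_one]
      map_mul' := fun a b => by
        rw [Subgroup.coe_mul, dU_mul, map_add, hψP _ a.2]; rfl }
  let θ : Abelianization N →* Multiplicative ((X → ℤ) ⧸ Λ) := Abelianization.lift θ0
  have hθ : Function.Injective θ := by
    rw [injective_iff_map_eq_one]
    intro a ha
    obtain ⟨n, rfl⟩ : ∃ n, Abelianization.of n = a := QuotientGroup.mk_surjective a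
    rw [Abelianization.lift_apply_of] at ha
    have h1 : ψ (dU (n : G)) = 0 := ha
    obtain ⟨v, hv⟩ := hf (dU (n : G))
    rw [← hv, hψ] at h1
    have h2 : Ψ v ∈ Λ := (QuotientAddGroup.eq_zero_iff _).1 h1
    obtain ⟨u, hu, hu2⟩ := hsK _ h2
    apply detect P f (v - u) _ n (by rw [map_sub, hu, sub_zero, hv])
    intro i
    have h3 : Ψ (v - u) = 0 := by rw [map_sub, hu2, sub_self]
    apply MonoidAlgebra.ext
    refine Finsupp.ext fun t => ?_
    exact congrFun h3 (i, t)
  have hout : ∀ a, ∃ z : X → ℤ, Multiplicative.ofAdd (QuotientAddGroup.mk' Λ z) = θ a := fun a =>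
    QuotientAddGroup.mk_surjective (s := Λ) (θ a).toAdd
  choose z hz using hout
  let ζ : CommGroup.torsion (Abelianization N) → (X → ℤ) ⧸ L := fun a => (z a : (X → ℤ) ⧸ L)
  have hζ : Function.Injective ζ := by
    rintro ⟨a, ha⟩ ⟨b, hb⟩ hab
    have h1 : -z a + z b ∈ L := QuotientAddGroup.eq.1 hab
    have hq : Multiplicative.ofAdd (QuotientAddGroup.mk' Λ (-z a + z b)) = θ (a⁻¹ * b) := by
      rw [map_add, map_neg, map_mul, map_inv, ← hz, ← hz]; rfl
    have h2 : -z a + z b ∈ Λ := by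
      apply hL _ h1
      have ht : a⁻¹ * b ∈ CommGroup.torsion (Abelianization N) := mul_mem (inv_mem ha) hb
      obtain ⟨k, hk, hk1⟩ := isOfFinOrder_iff_pow_eq_one.1 ht
      refine ⟨k, hk.ne', ?_⟩
      have h3 : θ (a⁻¹ * b) ^ k = 1 := by rw [← map_pow, hk1, map_one]
      rw [← hq] at h3
      have h4 : k • QuotientAddGroup.mk' Λ (-z a + z b) = 0 := h3
      rw [← map_nsmul] at h4
      exact (QuotientAddGroup.eq_zero_iff _).1 h4
    have h3 : θ (a⁻¹ * b) = 1 := by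
      rw [← hq]
      exact (QuotientAddGroup.eq_zero_iff _).2 h2
    have h4 : a⁻¹ * b = 1 := hθ (by rw [h3, map_one])
    exact Subtype.ext (inv_mul_eq_one.1 h4)
  have : L.FiniteIndex := ⟨hL0⟩
  refine ⟨Finite.of_injective ζ hζ, (Nat.card_le_card_of_injective ζ hζ).trans ?_⟩
  change L.index ≤ _
  refine hLC.trans (le_of_eq ?_)
  rw [← pow_mul, Fintype.card_prod, Fintype.card_fin, Subgroup.index, Nat.card_eq_fintype_card]

end Torsion

section Compare

theorem gens_bound (Q : Type*) [CommGroup Q] [Group.FG Q] : ∃ d : ℕ, ∀ P : Subgroup Q,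
    ∃ n ≤ d, ∃ x : Fin n → Q, P = Subgroup.closure (Set.range x) := by
  have : AddGroup.FG (Additive Q) := inferInstance
  have : Module.Finite ℤ (Additive Q) := Module.Finite.iff_addGroup_fg.2 this
  obtain ⟨d, f, hf⟩ := Module.Finite.exists_fin' ℤ (Additive Q)
  refine ⟨d, fun P => ?_⟩
  let M : Submodule ℤ (Fin d → ℤ) := (AddSubgroup.toIntSubmodule (Subgroup.toAddSubgroup P)).comap f
  obtain ⟨n, b⟩ := Submodule.basisOfPid (Pi.basisFun ℤ (Fin d)) M
  have hnd : n ≤ d := by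
    have h1 := Module.finrank_eq_card_basis b
    have h2 := Submodule.finrank_le M
    simp at h1 h2
    omega
  refine ⟨n, hnd, fun i => (f (b i)).toMul, ?_⟩
  apply le_antisymm
  · intro p hp
    obtain ⟨v, hv⟩ := hf (Additive.ofMul p)
    have hvM : v ∈ M := by
      have : f v ∈ AddSubgroup.toIntSubmodule (Subgroup.toAddSubgroup P) := by
        rw [hv]; exact hp
      exact this
    have h3 : (⟨v, hvM⟩ : M) = ∑ i, b.repr ⟨v, hvM⟩ i • b i := (b.sum_repr _).symm
    have h4 : v = ∑ i, b.repr ⟨v, hvM⟩ i • (b i : Fin d → ℤ) := by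
      have := congrArg (Subtype.val) h3
      rw [← Submodule.coe_subtype, map_sum] at this
      exact this
    have h5 : p = ∏ i, (f (b i)).toMul ^ (b.repr ⟨v, hvM⟩ i) := by
      have := congrArg f h4
      rw [hv, map_sum] at this
      simp only [map_smul] at this
      exact this
    rw [h5]
    refine Subgroup.prod_mem _ fun i _ => Subgroup.zpow_mem _ (Subgroup.subset_closure ?_) _
    exact ⟨i, rfl⟩
  · rw [Subgroup.closure_le]
    rintro _ ⟨i, rfl⟩
    exact (b i).2

theorem card_le_ker_mul {K L : Type*} [CommGroup K] [CommGroup L] (f : K →* L) (c : ℕ)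
    [Finite L] (_ : Finite f.ker) (hc : Nat.card f.ker ≤ c) : Nat.card K ≤ c * Nat.card L := by
  rw [← f.ker.card_mul_index, Subgroup.index_ker]
  exact Nat.mul_le_mul hc (Nat.card_le_card_of_injective _ Subtype.val_injective)

variable {G : Type*} [Group G]

open scoped commutatorElement in
theorem compare (hG : IsMetabelian G) (H : Subgroup G) (hH : H.index ≠ 0) (N : Subgroup G)
    (hN : N = (H.map (Abelianization.of (G := G))).comap Abelianization.of) (n : ℕ)
    (x : Fin n → Abelianization G) (hx : H.map Abelianization.of = Subgroup.closure (Set.range x))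
    (hfin : Finite (CommGroup.torsion (Abelianization N))) :
    Nat.card (CommGroup.torsion (Abelianization H)) ≤
      H.relIndex N ^ n * Nat.card (CommGroup.torsion (Abelianization N)) := by
  classical
  let A : Subgroup G := commutator G
  have hAc : ∀ a ∈ A, ∀ b ∈ A, a * b = b * a := by
    intro a ha b hb
    exact hG a ha b hb
  let _ : CommGroup A := { (inferInstance : Group A) with
    mul_comm := fun a b => Subtype.ext (hAc a a.2 b b.2) }
  have hAn : A.Normal := inferInstanceAs (commutator G).Normal
  have hker : (Abelianization.of (G := G)).ker = A := Abelianization.ker_of G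
  have hNA : N = H ⊔ A := by rw [hN, Subgroup.comap_map_eq, hker]
  have hHN : H ≤ N := hNA ▸ le_sup_left
  have hNn : N.Normal := by rw [hN]; infer_instance
  -- lifts of the generators
  have hlift : ∀ i, ∃ h ∈ H, Abelianization.of h = x i := by
    intro i
    have : x i ∈ H.map Abelianization.of := by rw [hx]; exact Subgroup.subset_closure ⟨i, rfl⟩
    exact this
  choose h hhH hhx using hlift
  -- commutator maps
  have hcm : ∀ g, ∀ a ∈ A, g * a * g⁻¹ * a⁻¹ ∈ A := fun g a ha =>
    mul_mem (hAn.conj_mem a ha g) (inv_mem ha)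
  let c : G → A →* A := fun g =>
    { toFun := fun a => ⟨g * a * g⁻¹ * (a : G)⁻¹, hcm g a a.2⟩
      map_one' := Subtype.ext (by simp)
      map_mul' := fun a b => Subtype.ext (by
        have h1 := hAc _ (inv_mem a.2) _ (hcm g b b.2)
        change g * (a * b) * g⁻¹ * ((a * b : G))⁻¹ =
          (g * a * g⁻¹ * (a : G)⁻¹) * (g * b * g⁻¹ * (b : G)⁻¹)
        calc g * (a * b) * g⁻¹ * ((a * b : G))⁻¹
            = g * a * g⁻¹ * ((g * b * g⁻¹ * (b : G)⁻¹) * (a : G)⁻¹) := by group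
          _ = _ := by rw [← h1]; group) }
  have hc : ∀ g (a : A), (c g a : G) = g * a * g⁻¹ * (a : G)⁻¹ := fun _ _ => rfl
  let Φ : (Fin n → A) →* A :=
    { toFun := fun a => ∏ i, c (h i) (a i)
      map_one' := by simp
      map_mul' := fun a b => by simp [Finset.prod_mul_distrib] }
  have hΦ : ∀ a, Φ a = ∏ i, c (h i) (a i) := fun _ => rfl
  let S : Subgroup G :=
    { carrier := {g | ∀ a, c g a ∈ Φ.range}
      one_mem' := fun a => by
        have : c 1 a = 1 := Subtype.ext (by simp [hc])
        rw [this]; exact one_mem _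
      mul_mem' := fun {g k} hg hk a => by
        have : c (g * k) a = c g ⟨k * a * k⁻¹, hAn.conj_mem a a.2 k⟩ * c k a :=
          Subtype.ext (by simp only [hc, Subgroup.coe_mul]; group)
        rw [this]; exact mul_mem (hg _) (hk _)
      inv_mem' := fun {g} hg a => by
        have : c g⁻¹ a = (c g ⟨g⁻¹ * a * g⁻¹⁻¹, hAn.conj_mem a a.2 g⁻¹⟩)⁻¹ :=
          Subtype.ext (by simp only [hc, Subgroup.coe_inv]; group)
        rw [this]; exact inv_mem (hg _) }
  have hAS : A ≤ S := fun g hg a => by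
    have : c g a = 1 := Subtype.ext (by
      rw [hc, hAc g hg a a.2]; simp)
    rw [this]; exact one_mem _
  have hhS : ∀ i, h i ∈ S := fun i a => by
    refine ⟨Pi.mulSingle i a, ?_⟩
    rw [hΦ, Finset.prod_eq_single i]
    · simp
    · intro j _ hj
      rw [Pi.mulSingle_eq_of_ne hj, map_one]
    · simp
  have hNS : N ≤ S := by
    rw [hN, hx]
    have h1 : Subgroup.closure (Set.range x) ≤ S.map Abelianization.of := by
      rw [Subgroup.closure_le]
      rintro _ ⟨i, rfl⟩
      exact ⟨h i, hhS i, hhx i⟩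
    refine (Subgroup.comap_mono h1).trans ?_
    rw [Subgroup.comap_map_eq, hker]
    exact sup_le le_rfl hAS
  -- the commutator subgroup of N
  have hY : ∀ y ∈ ⁅N, A⁆, ∃ a, (Φ a : G) = y := by
    have : ⁅N, A⁆ ≤ Φ.range.map A.subtype := by
      rw [Subgroup.commutator_le]
      intro g hg a ha
      exact ⟨c g ⟨a, ha⟩, hNS hg ⟨a, ha⟩, rfl⟩
    intro y hy
    obtain ⟨_, ⟨a, rfl⟩, rfl⟩ := this hy
    exact ⟨a, rfl⟩
  have hYn : (⁅N, A⁆).Normal := Subgroup.commutator_normal N A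
  have hNN : ⁅N, N⁆ ≤ ⁅H, H⁆ ⊔ ⁅N, A⁆ := by
    rw [Subgroup.commutator_le]
    intro u hu v hv
    have hu' := hu
    have hv' := hv
    rw [hNA] at hu' hv'
    obtain ⟨p, hp, a, ha, rfl⟩ := Subgroup.mem_sup_of_normal_right.1 hu'
    obtain ⟨q, hq, b, hb, rfl⟩ := Subgroup.mem_sup_of_normal_right.1 hv'
    have e : ⁅p * a, q * b⁆ = (p * ⁅q * b, a⁆⁻¹ * p⁻¹) * (⁅p, q⁆ * (q * ⁅p, b⁆ * q⁻¹)) := by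
      simp only [commutatorElement_def]; group
    rw [e]
    refine mul_mem (Subgroup.mem_sup_right ?_) (mul_mem (Subgroup.mem_sup_left ?_) (Subgroup.mem_sup_right ?_))
    · exact hYn.conj_mem _ (inv_mem (Subgroup.commutator_mem_commutator hv ha)) _
    · exact Subgroup.commutator_mem_commutator hp hq
    · exact hYn.conj_mem _ (Subgroup.commutator_mem_commutator (hHN hp) hb) _
  -- the map
  let φ : Abelianization H →* Abelianization N := Abelianization.map (Subgroup.inclusion hHN)
  have hcommH : ∀ (K : Subgroup G) (k : K), Abelianization.of k = 1 ↔ (k : G) ∈ ⁅K, K⁆ := by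
    intro K k
    rw [← MonoidHom.mem_ker, Abelianization.ker_of]
    have : (commutator K).map K.subtype = ⁅K, K⁆ := by
      rw [commutator_def, Subgroup.map_commutator]; simp [← MonoidHom.range_eq_map]
    rw [← this]
    constructor
    · intro hk; exact ⟨k, hk, rfl⟩
    · rintro ⟨k', hk', e⟩
      have : k' = k := Subtype.ext e
      exact this ▸ hk'
  let Φ' : (Fin n → A) →* G := A.subtype.comp Φ
  let Z : Subgroup (Fin n → A) := H.comap Φ'
  let η : Z →* Abelianization H := Abelianization.of.comp
    ((Φ'.comp Z.subtype).codRestrict H (fun z => z.2))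
  have hηr : φ.ker ≤ η.range := by
    intro a ha
    obtain ⟨k, rfl⟩ : ∃ k, Abelianization.of k = a := QuotientGroup.mk_surjective a
    have h1 : Abelianization.of (Subgroup.inclusion hHN k) = 1 := ha
    rw [hcommH] at h1
    have h2 := hNN h1
    obtain ⟨p, hp, y, hy, hpy⟩ := Subgroup.mem_sup_of_normal_right.1 h2
    obtain ⟨a, rfl⟩ := hY y hy
    have hpH : p ∈ H := Subgroup.commutator_le_self H hp
    have hk : (k : G) = p * Φ a := hpy.symm
    have haZ : a ∈ Z := by
      change (Φ a : G) ∈ H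
      have : (Φ a : G) = p⁻¹ * k := by rw [hk]; group
      rw [this]; exact mul_mem (inv_mem hpH) k.2
    refine ⟨⟨a, haZ⟩, ?_⟩
    have h3 : k = ⟨p, hpH⟩ * ⟨(Φ a : G), haZ⟩ := Subtype.ext hk
    rw [h3, map_mul, (hcommH H ⟨p, hpH⟩).2 hp, one_mul]
    rfl
  let B : Subgroup A := H.subgroupOf A
  have hBidx : B.index = H.relIndex A := rfl
  have hkN : H.relIndex N ≠ 0 := fun h0 => hH (by
    rw [← Subgroup.relIndex_mul_index hHN, h0, zero_mul])
  have hBle : B.index ≤ H.relIndex N :=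
    Subgroup.relIndex_le_of_le_right (hNA ▸ le_sup_right) hkN
  have hHf : H.FiniteIndex := ⟨hH⟩
  have hBf' : (H.subgroupOf A).FiniteIndex := inferInstance
  have hB0 : B.index ≠ 0 := hBf'.index_ne_zero
  have hBf : B.FiniteIndex := ⟨hB0⟩
  let β : (Fin n → A) →* (Fin n → A ⧸ B) :=
    { toFun := fun a i => QuotientGroup.mk' B (a i)
      map_one' := by ext i; simp
      map_mul' := fun a b => by ext i; simp }
  have hβk : ∀ a, a ∈ β.ker → ∀ i, (a i : G) ∈ H := by
    intro a ha i
    have : QuotientGroup.mk' B (a i) = 1 := congrFun ha i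
    exact Subgroup.mem_subgroupOf.1 ((QuotientGroup.eq_one_iff (a i)).1 this)
  have hβη : β.ker.subgroupOf Z ≤ η.ker := by
    intro z hz
    have hz' := hβk z.1 (Subgroup.mem_subgroupOf.1 hz)
    have : (Φ z.1 : G) ∈ ⁅H, H⁆ := by
      have : Φ z.1 ∈ (⁅H, H⁆).subgroupOf A := by
        rw [hΦ]
        refine Subgroup.prod_mem _ fun i _ => ?_
        rw [Subgroup.mem_subgroupOf]
        exact Subgroup.commutator_mem_commutator (hhH i) (hz' i)
      exact this
    exact (hcommH H ⟨_, z.2⟩).2 this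
  have hβ0 : β.ker.index ≠ 0 ∧ β.ker.index ≤ B.index ^ n := by
    rw [Subgroup.index_ker]
    refine ⟨Nat.card_pos.ne', ?_⟩
    refine (Nat.card_le_card_of_injective _ Subtype.val_injective).trans (le_of_eq ?_)
    rw [Nat.card_fun, Nat.card_fin]; rfl
  have hβZ : (β.ker.subgroupOf Z).index ≠ 0 ∧ (β.ker.subgroupOf Z).index ≤ β.ker.index := by
    have hd : β.ker.relIndex Z ∣ β.ker.index := Subgroup.relIndex_dvd_index_of_normal _ _
    exact ⟨fun h0 => hβ0.1 (Nat.eq_zero_of_zero_dvd (h0 ▸ hd)),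
      Nat.le_of_dvd (Nat.pos_of_ne_zero hβ0.1) hd⟩
  have hηd : η.ker.index ∣ (β.ker.subgroupOf Z).index := Subgroup.index_dvd_of_le hβη
  have hηc : Nat.card η.range ≠ 0 ∧ Nat.card η.range ≤ H.relIndex N ^ n := by
    rw [← Subgroup.index_ker]
    refine ⟨fun h0 => hβZ.1 (Nat.eq_zero_of_zero_dvd (h0 ▸ hηd)), ?_⟩
    exact (Nat.le_of_dvd (Nat.pos_of_ne_zero hβZ.1) hηd).trans (hβZ.2.trans (hβ0.2.trans
      (Nat.pow_le_pow_left hBle n)))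
  have hηfin : Finite η.range := Nat.finite_of_card_ne_zero hηc.1
  -- restrict to torsion
  let τ : CommGroup.torsion (Abelianization H) →* CommGroup.torsion (Abelianization N) :=
    (φ.comp (Subgroup.subtype _)).codRestrict _ (fun t => by
      exact MonoidHom.isOfFinOrder φ t.2)
  let inj : τ.ker → η.range := fun t => ⟨t.1.1, hηr (by
    have := t.2
    exact congrArg Subtype.val this)⟩
  have hinj : Function.Injective inj := fun a b hab => by
    apply Subtype.ext; apply Subtype.ext
    exact congrArg (fun t : η.range => (t : Abelianization H)) hab
  exact card_le_ker_mul τ _ (Finite.of_injective inj hinj)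
    ((Nat.card_le_card_of_injective inj hinj).trans hηc.2)

end Compare

theorem stmt_10 (G : Type*) [Group G] [Group.FG G] (hG : IsMetabelian G) :
    ∃ D : ℕ, ∀ H : Subgroup G, H.index ≠ 0 →
      Nat.card (CommGroup.torsion (Abelianization H)) < D ^ H.index := by
  have : Group.FG (Abelianization G) :=
    Group.fg_of_surjective (f := Abelianization.of) (QuotientGroup.mk'_surjective _)
  obtain ⟨d, hd⟩ := gens_bound (Abelianization G)
  obtain ⟨C, hC, hCP⟩ := torsion_bound (G := G)
  refine ⟨2 ^ d * C + 1, fun H hH => ?_⟩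
  let P := H.map (Abelianization.of (G := G))
  let N := P.comap (Abelianization.of (G := G))
  obtain ⟨n, hn, x, hx⟩ := hd P
  have hHN : H ≤ N := Subgroup.le_comap_map _ _
  have hmul := Subgroup.relIndex_mul_index hHN
  have hNP : N.index = P.index := Subgroup.index_comap_of_surjective _ (QuotientGroup.mk'_surjective _)
  have hP : P.index ≠ 0 := fun h0 => hH (by rw [← hmul, hNP, h0, mul_zero])
  have hk : H.relIndex N ≠ 0 := fun h0 => hH (by rw [← hmul, h0, zero_mul])
  obtain ⟨hfin, hcard⟩ := hCP P hP
  have hmain := compare hG H hH N rfl n x hx hfin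
  have hk_le : H.relIndex N ≤ H.index := by
    rw [← hmul]; exact Nat.le_mul_of_pos_right _ (Nat.pos_of_ne_zero (hNP ▸ hP))
  have hP_le : P.index ≤ H.index := by
    rw [← hmul, hNP]; exact Nat.le_mul_of_pos_left _ (Nat.pos_of_ne_zero hk)
  calc _ ≤ H.relIndex N ^ n * C ^ P.index := hmain.trans (Nat.mul_le_mul_left _ hcard)
    _ ≤ (2 ^ d) ^ H.index * C ^ H.index := by
        refine Nat.mul_le_mul ?_ (Nat.pow_le_pow_right hC hP_le)
        calc H.relIndex N ^ n ≤ H.relIndex N ^ d := Nat.pow_le_pow_right (Nat.pos_of_ne_zero hk) hn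
          _ ≤ (2 ^ H.index) ^ d := Nat.pow_le_pow_left (hk_le.trans Nat.lt_two_pow_self.le) d
          _ = _ := by rw [← pow_mul, ← pow_mul, mul_comm]
    _ = (2 ^ d * C) ^ H.index := (mul_pow _ _ _).symm
    _ < _ := Nat.pow_lt_pow_left (Nat.lt_succ_self _) hH
end
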